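/- arXiv:math/0104131 — 2 statements merged into one kernel-verified Lean document; each statement's English description precedes it below -/
import Mathlib

section
/- Let p > 3 be a prime such that q = (p+1)/2 is also prime, and let p̃ denote the maximal odd divisor of p − 1. Then 4·C_d(p) = C_d(p+1) + 2·C̄_u(2p̃+1). -/
open Finset

/-- Number of directed circulant graphs of odd prime order `p`:
`C_d(p) = (1/(p-1))·∑_{r | p-1} φ(r)·2^{(p-1)/r}`. -/
def Cd (p : ℕ) : ℚ :=
  (1 / ((p : ℚ) - 1)) *
    ∑ r ∈ (p - 1).divisors, (Nat.totient r : ℚ) * (2 : ℚ) ^ ((p - 1) / r)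

/-- Number of directed circulant graphs of order `2q`, `q` an odd prime:
`C_d(2q) = 2·(1/(q-1))·∑_{r | q-1} φ(r)·4^{(q-1)/r}`. -/
def CdTwice (q : ℕ) : ℚ :=
  2 * ((1 / ((q : ℚ) - 1)) *
    ∑ r ∈ (q - 1).divisors, (Nat.totient r : ℚ) * (4 : ℚ) ^ ((q - 1) / r))

/-- For odd `p̃`, `C̄_u(2p̃+1) = (1/p̃)·∑_{r | p̃} φ(r)·2^{p̃/r}`
(the formula counting undirected circulants of order `2p̃+1` when that is prime). -/
def CuBar (pt : ℕ) : ℚ :=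
  (1 / (pt : ℚ)) * ∑ r ∈ pt.divisors, (Nat.totient r : ℚ) * (2 : ℚ) ^ (pt / r)

/-!
Write `S(c, n) = ∑_{r ∣ n} φ(r) c ^ (n / r)`. When `p - 1 = 2 ^ (j + 1) * p̃`, the divisors of
`p - 1` are those of `q - 1 = 2 ^ j * p̃` together with the `2 ^ (j + 1) * s` for `s ∣ p̃`. The
first kind contributes `S(4, q - 1)` to `S(2, p - 1)`, since
`2 ^ ((p - 1) / r) = 4 ^ ((q - 1) / r)`; the second contributes `φ(2 ^ (j + 1)) * S(2, p̃)`, by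
multiplicativity of `φ`.
-/

theorem sum_divisors_mul_of_coprime {M : Type*} [AddCommMonoid M] {m n : ℕ} (hmn : m.Coprime n)
    (f : ℕ → M) :
    ∑ r ∈ (m * n).divisors, f r = ∑ d ∈ m.divisors, ∑ s ∈ n.divisors, f (d * s) := by
  rw [Nat.divisors_mul, mul_def, sum_image hmn.mul_injOn_divisors, sum_product]

theorem sum_divisors_prime_pow_succ_mul {M : Type*} [AddCommMonoid M] {ℓ n : ℕ} (hℓ : ℓ.Prime)
    (hn : ℓ.Coprime n) (j : ℕ) (f : ℕ → M) :
    ∑ r ∈ (ℓ ^ (j + 1) * n).divisors, f r =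
      ∑ r ∈ (ℓ ^ j * n).divisors, f r + ∑ s ∈ n.divisors, f (ℓ ^ (j + 1) * s) := by
  rw [sum_divisors_mul_of_coprime (hn.pow_left _), sum_divisors_mul_of_coprime (hn.pow_left _),
    Nat.sum_divisors_prime_pow hℓ, Nat.sum_divisors_prime_pow hℓ, sum_range_succ]

/-- The sum `∑_{r ∣ n} φ(r) c ^ (n / r)`, which for `c : ℕ` is `n` times the number of necklaces of
`n` beads in `c` colours; `Cd`, `CdTwice` and `CuBar` are all multiples of such sums. -/
def necklaceSum {R : Type*} [Semiring R] (c : R) (n : ℕ) : R :=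
  ∑ r ∈ n.divisors, (r.totient : R) * c ^ (n / r)

section necklaceSum

variable {R : Type*} [Semiring R] (c : R)

theorem sum_divisors_totient_mul_pow_mul_div (a m : ℕ) :
    ∑ r ∈ m.divisors, (r.totient : R) * c ^ (a * m / r) = necklaceSum (c ^ a) m := by
  refine sum_congr rfl fun r hr => ?_
  rw [Nat.mul_div_assoc a (Nat.dvd_of_mem_divisors hr), pow_mul]

theorem sum_divisors_totient_mul_mul_pow {a n : ℕ} (ha : 0 < a) (han : a.Coprime n) :
    ∑ s ∈ n.divisors, ((a * s).totient : R) * c ^ (a * n / (a * s)) =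
      a.totient * necklaceSum c n := by
  rw [necklaceSum, mul_sum]
  refine sum_congr rfl fun s hs => ?_
  rw [Nat.totient_mul (han.coprime_dvd_right (Nat.dvd_of_mem_divisors hs)),
    Nat.mul_div_mul_left _ _ ha, Nat.cast_mul, mul_assoc]

theorem necklaceSum_prime_pow_succ_mul {ℓ n : ℕ} (hℓ : ℓ.Prime) (hn : ℓ.Coprime n) (j : ℕ) :
    necklaceSum c (ℓ ^ (j + 1) * n) =
      necklaceSum (c ^ ℓ) (ℓ ^ j * n) + (ℓ ^ (j + 1)).totient * necklaceSum c n := by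
  rw [← sum_divisors_totient_mul_pow_mul_div,
    ← sum_divisors_totient_mul_mul_pow c (pow_pos hℓ.pos _) (hn.pow_left _), ← mul_assoc,
    ← pow_succ', necklaceSum, sum_divisors_prime_pow_succ_mul hℓ hn]

theorem necklaceSum_two_pow_succ_mul {n : ℕ} (hn : Odd n) (j : ℕ) :
    necklaceSum c (2 ^ (j + 1) * n) =
      necklaceSum (c ^ 2) (2 ^ j * n) + 2 ^ j * necklaceSum c n := by
  simp [necklaceSum_prime_pow_succ_mul c Nat.prime_two hn.coprime_two_left,
    Nat.totient_prime_pow_succ Nat.prime_two]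

end necklaceSum

theorem Cd_eq_necklaceSum_div {p : ℕ} (hp : 0 < p) :
    Cd p = necklaceSum 2 (p - 1) / ((p - 1 : ℕ) : ℚ) := by
  rw [Cd, necklaceSum, Nat.cast_pred hp, one_div_mul_eq_div]

theorem CdTwice_eq_necklaceSum_div {q : ℕ} (hq : 0 < q) :
    CdTwice q = 2 * (necklaceSum 4 (q - 1) / ((q - 1 : ℕ) : ℚ)) := by
  rw [CdTwice, necklaceSum, Nat.cast_pred hq, one_div_mul_eq_div]

theorem CuBar_eq_necklaceSum_div (n : ℕ) : CuBar n = necklaceSum 2 n / (n : ℚ) := by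
  rw [CuBar, necklaceSum, one_div_mul_eq_div]

theorem four_mul_Cd_general (p q k pt : ℕ) (hpq : p + 1 = 2 * q) (hpt : Odd pt)
    (hfac : p - 1 = 2 ^ k * pt) :
    4 * Cd p = CdTwice q + 2 * CuBar pt := by
  have hp : 0 < p := by
    have : 0 < p - 1 := hfac ▸ Nat.mul_pos (by positivity) hpt.pos
    omega
  have hq : 0 < q := by omega
  obtain _ | j := k
  · obtain ⟨m, rfl⟩ := hpt
    omega
  have hqfac : q - 1 = 2 ^ j * pt := by
    rw [pow_succ', mul_assoc] at hfac
    omega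
  have hpt0 : (pt : ℚ) ≠ 0 := Nat.cast_ne_zero.mpr hpt.pos.ne'
  have hsum : necklaceSum (2 : ℚ) (2 ^ (j + 1) * pt) =
      necklaceSum 4 (2 ^ j * pt) + 2 ^ j * necklaceSum 2 pt := by
    rw [necklaceSum_two_pow_succ_mul 2 hpt, show (2 : ℚ) ^ 2 = 4 by norm_num]
  rw [Cd_eq_necklaceSum_div hp, CdTwice_eq_necklaceSum_div hq, CuBar_eq_necklaceSum_div, hfac,
    hqfac, hsum]
  push_cast
  field_simp
  ring

/-- If `p > 3` and `q = (p+1)/2` are both prime and `p̃` is the maximal odd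
divisor of `p - 1` (i.e. `p - 1 = 2^k·p̃` with `p̃` odd), then
`4·C_d(p) = C_d(p+1) + 2·C̄_u(2p̃+1)`. -/
theorem four_mul_Cd (p q k pt : ℕ) (hp : p.Prime) (hp3 : 3 < p)
    (hq : q.Prime) (hpq : p + 1 = 2 * q) (hpt : Odd pt)
    (hfac : p - 1 = 2 ^ k * pt) :
    4 * Cd p = CdTwice q + 2 * CuBar pt :=
  four_mul_Cd_general p q k pt hpq hpt hfac
end

section
/- For every odd prime p, C_sd(p²) − C_su(p²) − C_t(p²) = C_sd(p)² − C_su(p)² − C_t(p)²; that is, the number of mixed self-complementary directed circulant graphs of order p² equals the corresponding difference of squares of the counts for order p. -/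
/-!
For odd `p` one has `A = B + T`, so the terms with factor `1 / p` cancel. To see `A = B + T` for
`p = 2 * m + 1`, write the even divisors of `2 * m` as `2 * s` with `s ∣ m`, and use that
`φ (2 * s)` is `2 * φ s` for even `s` (which gives `B`) and `φ s` for odd `s` (which gives `T`).
-/

open Finset

/-- `A(a) = (1/(p-1))·∑_{r | p-1, r even} φ(r)·a^{(p-1)/r}`. -/
def A (p : ℕ) (a : ℚ) : ℚ :=
  (1 / ((p : ℚ) - 1)) *
    ∑ r ∈ (p - 1).divisors.filter (fun r => Even r),
      (Nat.totient r : ℚ) * a ^ ((p - 1) / r)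

/-- `B(a) = (2/(p-1))·∑_{r | (p-1)/2, r even} φ(r)·a^{(p-1)/(2r)}`. -/
def B (p : ℕ) (a : ℚ) : ℚ :=
  (2 / ((p : ℚ) - 1)) *
    ∑ r ∈ ((p - 1) / 2).divisors.filter (fun r => Even r),
      (Nat.totient r : ℚ) * a ^ ((p - 1) / (2 * r))

/-- `T(a) = (1/(p-1))·∑_{r | p-1, r odd} φ(r)·a^{(p-1)/(2r)}`. -/
def T (p : ℕ) (a : ℚ) : ℚ :=
  (1 / ((p : ℚ) - 1)) *
    ∑ r ∈ (p - 1).divisors.filter (fun r => Odd r),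
      (Nat.totient r : ℚ) * a ^ ((p - 1) / (2 * r))

/-- Number of self-complementary directed circulant graphs of order `p²`. -/
def CsdSq (p : ℕ) : ℚ :=
  (1 / (p : ℚ)) * (A p ((2 : ℚ) ^ (p + 1)) - A p 4) + (A p 2) ^ 2

/-- Number of self-complementary undirected circulant graphs of order `p²`. -/
def CsuSq (p : ℕ) : ℚ :=
  (1 / (p : ℚ)) * (B p ((2 : ℚ) ^ (p + 1)) - B p 4) + (B p 2) ^ 2

/-- Number of circulant tournaments of order `p²`. -/
def CtSq (p : ℕ) : ℚ :=
  (1 / (p : ℚ)) * (T p ((2 : ℚ) ^ (p + 1)) - T p 4) + (T p 2) ^ 2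

lemma filter_dvd_divisors_mul {k : ℕ} (hk : k ≠ 0) (m : ℕ) :
    {r ∈ (k * m).divisors | k ∣ r} = m.divisors.image (k * ·) := by
  ext r
  simp only [mem_filter, mem_image, Nat.mem_divisors]
  constructor
  · rintro ⟨⟨hdvd, hne⟩, s, rfl⟩
    exact ⟨s, ⟨Nat.dvd_of_mul_dvd_mul_left hk.pos hdvd, right_ne_zero_of_mul hne⟩, rfl⟩
  · rintro ⟨s, ⟨hdvd, hne⟩, rfl⟩
    exact ⟨⟨Nat.mul_dvd_mul_left k hdvd, mul_ne_zero hk hne⟩, dvd_mul_right k s⟩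

lemma filter_coprime_divisors_mul {k : ℕ} (hk : k ≠ 0) (m : ℕ) :
    {r ∈ (k * m).divisors | k.Coprime r} = {r ∈ m.divisors | k.Coprime r} := by
  ext r
  simp only [mem_filter, Nat.mem_divisors, and_congr_left_iff]
  intro hcop
  rw [hcop.symm.dvd_mul_left, mul_ne_zero_iff_left hk]

lemma sum_totient_prime_mul {R : Type*} [Semiring R] {q : ℕ} (hq : q.Prime) (S : Finset ℕ)
    (f : ℕ → R) :
    ∑ s ∈ S, ((q * s).totient : R) * f s =
      q * ∑ s ∈ S with q ∣ s, (s.totient : R) * f s +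
        (q - 1 : ℕ) * ∑ s ∈ S with q.Coprime s, (s.totient : R) * f s := by
  rw [← sum_filter_add_sum_filter_not S (q ∣ ·)]
  simp only [hq.coprime_iff_not_dvd, mul_sum]
  congr 1 <;> refine sum_congr rfl fun s hs => ?_
  · rw [Nat.totient_mul_of_prime_of_dvd hq (mem_filter.1 hs).2, Nat.cast_mul, mul_assoc]
  · rw [Nat.totient_mul_of_prime_of_not_dvd hq (mem_filter.1 hs).2, Nat.cast_mul, mul_assoc]

lemma sum_totient_filter_dvd_divisors_prime_mul {R : Type*} [Semiring R] {q : ℕ} (hq : q.Prime)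
    (m : ℕ) (f : ℕ → R) :
    ∑ r ∈ (q * m).divisors with q ∣ r, (r.totient : R) * f r =
      q * ∑ s ∈ m.divisors with q ∣ s, (s.totient : R) * f (q * s) +
        (q - 1 : ℕ) * ∑ s ∈ (q * m).divisors with q.Coprime s, (s.totient : R) * f (q * s) := by
  rw [filter_dvd_divisors_mul hq.ne_zero, sum_image (mul_right_injective₀ hq.ne_zero).injOn,
    sum_totient_prime_mul hq, filter_coprime_divisors_mul hq.ne_zero]

lemma A_eq_B_add_T {p : ℕ} (hodd : Odd p) (a : ℚ) : A p a = B p a + T p a := by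
  obtain ⟨m, rfl⟩ := hodd
  have hsum := sum_totient_filter_dvd_divisors_prime_mul Nat.prime_two m fun r => a ^ (2 * m / r)
  simp only [← even_iff_two_dvd, Nat.coprime_two_left] at hsum
  simp only [A, B, T, Nat.add_sub_cancel, Nat.mul_div_cancel_left m two_pos, hsum]
  push_cast
  ring

theorem mixed_sq_identity_general {p : ℕ} (hp : 1 < p) (hodd : Odd p) :
    CsdSq p - CsuSq p - CtSq p = (A p 2) ^ 2 - (B p 2) ^ 2 - (T p 2) ^ 2 := by
  simp only [CsdSq, CsuSq, CtSq, A_eq_B_add_T hodd]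
  ring

/-- For every odd prime `p`,
`C_sd(p²) − C_su(p²) − C_t(p²) = C_sd(p)² − C_su(p)² − C_t(p)²`,
where `C_sd(p) = A(2)`, `C_su(p) = B(2)`, `C_t(p) = T(2)`. -/
theorem mixed_sq_identity (p : ℕ) (hp : p.Prime) (hodd : Odd p) :
    CsdSq p - CsuSq p - CtSq p = (A p 2) ^ 2 - (B p 2) ^ 2 - (T p 2) ^ 2 :=
  mixed_sq_identity_general hp.one_lt hodd
end
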